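/- arXiv:1209.6532 — 3 statements merged into one kernel-verified Lean document; each statement's English description precedes it below -/
import Mathlib

section
/- Let d ≥ 2 be an integer, let ζ ∈ ℂ be a primitive d-th root of unity, and let h₁, …, h_m and n₁, …, n_m be integers. Assume: (i) there exist integers α₁, …, α_m with α₁h₁ + … + α_m h_m = 1 and d ∣ (α₁n₁ + … + α_m n_m); and (ii) there exists an index i₀ with d ∤ n_{i₀}. Then every common divisor in ℂ[T,T⁻¹] of the elements ζ^{n₁}·T^{h₁} − 1, …, ζ^{n_m}·T^{h_m} − 1 is a unit. -/
open LaurentPolynomial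

/-- Let `d ≥ 2`, `ζ ∈ ℂ` a primitive `d`-th root of unity, and `h₁,…,h_m`, `n₁,…,n_m`
integers.  Assume (i) there are integers `αᵢ` with `∑ αᵢhᵢ = 1` and `d ∣ ∑ αᵢnᵢ`, and
(ii) there is `i₀` with `d ∤ n_{i₀}`.  Then every common divisor in `ℂ[T,T⁻¹]` of the
elements `ζ^{nᵢ}·T^{hᵢ} − 1` is a unit. -/
theorem common_divisor_isUnit_of_torsion_knot
    (d : ℕ) (hd : 2 ≤ d) (ζ : ℂ) (hζ : IsPrimitiveRoot ζ d)
    (m : ℕ) (h n : Fin m → ℤ)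
    (hi : ∃ α : Fin m → ℤ, (∑ i, α i * h i) = 1 ∧ (d : ℤ) ∣ ∑ i, α i * n i)
    (hii : ∃ i₀, ¬ (d : ℤ) ∣ n i₀)
    (g : LaurentPolynomial ℂ)
    (hg : ∀ i, g ∣ (C (ζ ^ (n i)) * T (h i) - 1)) :
    IsUnit g := by
  obtain ⟨α, hα, hdvd⟩ := hi
  obtain ⟨i₀, hi₀⟩ := hii
  have hd0 : d ≠ 0 := by omega
  have hζ0 : ζ ≠ 0 := hζ.ne_zero hd0
  -- the units `ζ` and `T` of the Laurent polynomial ring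
  let z₀ : ℂˣ := Units.mk0 ζ hζ0
  let z : (LaurentPolynomial ℂ)ˣ := Units.map (C : ℂ →+* LaurentPolynomial ℂ).toMonoidHom z₀
  let t : (LaurentPolynomial ℂ)ˣ :=
    ⟨T 1, T (-1), by rw [← T_add]; simp, by rw [← T_add]; simp⟩
  have hz : ∀ k : ℤ, ((z ^ k : (LaurentPolynomial ℂ)ˣ) : LaurentPolynomial ℂ) = C (ζ ^ k) := by
    intro k
    have e : z ^ k = Units.map (C : ℂ →+* LaurentPolynomial ℂ).toMonoidHom (z₀ ^ k) :=
      (map_zpow _ z₀ k).symm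
    rw [e]
    change C ((z₀ ^ k : ℂˣ) : ℂ) = C (ζ ^ k)
    rw [Units.val_zpow_eq_zpow_val]
    rfl
  have ht : ∀ k : ℤ, ((t ^ k : (LaurentPolynomial ℂ)ˣ) : LaurentPolynomial ℂ) = T k := by
    intro k
    induction k using Int.induction_on with
    | zero => simp
    | succ k ih => rw [zpow_add_one, Units.val_mul, ih, T_add]
    | pred k ih => rw [zpow_sub_one, Units.val_mul, ih, sub_eq_add_neg, T_add]; rfl
  -- pass to the quotient by `g`
  let q := Ideal.Quotient.mk (Ideal.span {g})
  let π := Units.map q.toMonoidHom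
  have key : ∀ i, π z ^ n i * π t ^ h i = 1 := by
    intro i
    rw [← map_zpow π, ← map_zpow π, ← map_mul π]
    ext
    change q ((z ^ n i * t ^ h i : (LaurentPolynomial ℂ)ˣ) : LaurentPolynomial ℂ) = 1
    rw [Units.val_mul, hz, ht, ← sub_eq_zero, ← map_one q, ← map_sub]
    exact Ideal.Quotient.eq_zero_iff_mem.2 (Ideal.mem_span_singleton.2 (hg i))
  have hzd : ∀ k : ℤ, (d : ℤ) ∣ k → z ^ k = 1 := by
    intro k hk
    ext1
    rw [hz, (hζ.zpow_eq_one_iff_dvd k).2 hk]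
    simp
  have hprod : π z ^ (∑ i, α i * n i) * π t ^ (∑ i, α i * h i) = 1 := by
    have hs : ∀ (x : (LaurentPolynomial ℂ ⧸ Ideal.span {g})ˣ) (f : Fin m → ℤ),
        x ^ (∑ i, f i) = ∏ i, x ^ f i := by
      intro x f
      exact map_sum (zmultiplesHom (Additive (LaurentPolynomial ℂ ⧸ Ideal.span {g})ˣ)
        (Additive.ofMul x)) f Finset.univ
    rw [hs, hs, ← Finset.prod_mul_distrib]
    refine Finset.prod_eq_one fun i _ => ?_
    rw [mul_comm (α i), mul_comm (α i), zpow_mul, zpow_mul]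
    refine (mul_zpow (π z ^ n i) (π t ^ h i) (α i)).symm.trans ?_
    rw [key, one_zpow]
  have ht1 : π t = 1 := by
    rw [hα, zpow_one, ← map_zpow π, hzd _ hdvd, map_one, one_mul] at hprod
    exact hprod
  have hz1 := key i₀
  rw [ht1, one_zpow, mul_one, ← map_zpow π] at hz1
  have hz2 : q (C (ζ ^ n i₀)) = 1 := by
    rw [← hz]
    exact congrArg Units.val hz1
  have hdiv : g ∣ C (ζ ^ n i₀ - 1) := by
    rw [← Ideal.mem_span_singleton, ← Ideal.Quotient.eq_zero_iff_mem, map_sub, map_sub, map_one]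
    change q _ - q 1 = 0
    rw [hz2, map_one, sub_self]
  refine isUnit_of_dvd_unit hdiv (IsUnit.map C (isUnit_iff_ne_zero.2 ?_))
  rw [sub_ne_zero]
  exact fun h1 => hi₀ ((hζ.zpow_eq_one_iff_dvd _).1 h1)
end

section
/- Let ν ≥ 2 and for i = 1, …, m let h_i ∈ ℤ^ν be vectors that generate ℤ^ν as a group. Then in the group algebra ℂ[ℤ^ν], every common divisor of the elements x^{h₁} − 1, …, x^{h_m} − 1 is a unit. -/
open AddMonoidAlgebra in
/-- The exponents `v` with `d ∣ x^v - 1` form a subgroup. -/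
def exponentSubgroup {ν : ℕ} (d : AddMonoidAlgebra ℂ (Fin ν → ℤ)) : AddSubgroup (Fin ν → ℤ) where
  carrier := {v | d ∣ AddMonoidAlgebra.single v (1 : ℂ) - 1}
  zero_mem' := by
    simp [← AddMonoidAlgebra.one_def]
  add_mem' := by
    intro a b ha hb
    have e : AddMonoidAlgebra.single (a + b) (1 : ℂ) - 1
        = AddMonoidAlgebra.single a (1 : ℂ) * (AddMonoidAlgebra.single b (1 : ℂ) - 1)
          + (AddMonoidAlgebra.single a (1 : ℂ) - 1) := by
      rw [mul_sub, AddMonoidAlgebra.single_mul_single]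
      simp
    simp only [Set.mem_ofPred_eq] at *
    rw [e]
    exact dvd_add (Dvd.dvd.mul_left hb _) ha
  neg_mem' := by
    intro a ha
    have e : AddMonoidAlgebra.single (-a) (1 : ℂ) - 1
        = -(AddMonoidAlgebra.single (-a) (1 : ℂ) * (AddMonoidAlgebra.single a (1 : ℂ) - 1)) := by
      rw [mul_sub, AddMonoidAlgebra.single_mul_single]
      simp [← AddMonoidAlgebra.one_def]
    simp only [Set.mem_ofPred_eq] at *
    rw [e]
    exact (dvd_neg).2 (Dvd.dvd.mul_left ha _)

/-- The projection `v ↦ v - v_i e_i`. -/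
def killCoord {ν : ℕ} (i : Fin ν) : (Fin ν → ℤ) →+ (Fin ν → ℤ) where
  toFun v := v - v i • Pi.single i 1
  map_zero' := by simp
  map_add' a b := by simp only [Pi.add_apply, add_smul]; abel

theorem dvd_sub_kill {ν : ℕ} (i : Fin ν) (f : AddMonoidAlgebra ℂ (Fin ν → ℤ)) :
    (AddMonoidAlgebra.single (Pi.single i 1 : Fin ν → ℤ) (1 : ℂ) - 1) ∣
      f - AddMonoidAlgebra.mapDomain (killCoord i) f := by
  induction f using AddMonoidAlgebra.induction_linear with
  | zero => simp
  | add f g hf hg =>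
    rw [AddMonoidAlgebra.mapDomain_add, add_sub_add_comm]
    exact dvd_add hf hg
  | single v c =>
    rw [AddMonoidAlgebra.mapDomain_single]
    have hm : v i • (Pi.single i 1 : Fin ν → ℤ) ∈ exponentSubgroup
        (AddMonoidAlgebra.single (Pi.single i 1 : Fin ν → ℤ) (1 : ℂ) - 1) :=
      AddSubgroup.zsmul_mem _ (dvd_refl _) _
    have e : AddMonoidAlgebra.single v c - AddMonoidAlgebra.single (killCoord i v) c
        = AddMonoidAlgebra.single (killCoord i v) c *
          (AddMonoidAlgebra.single (v i • (Pi.single i 1 : Fin ν → ℤ)) (1 : ℂ) - 1) := by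
      rw [mul_sub, AddMonoidAlgebra.single_mul_single, mul_one, mul_one]
      congr 2
      exact (sub_add_cancel v _).symm
    rw [e]
    exact Dvd.dvd.mul_left hm _

theorem single_sub_one_ne_zero {ν : ℕ} {v : Fin ν → ℤ} (hv : v ≠ 0) :
    AddMonoidAlgebra.single v (1 : ℂ) - 1 ≠ 0 := by
  intro h0
  rw [sub_eq_zero, AddMonoidAlgebra.one_def] at h0
  exact hv (AddMonoidAlgebra.of_injective (R := ℂ) (M := Fin ν → ℤ)
    (a₁ := Multiplicative.ofAdd v) (a₂ := Multiplicative.ofAdd 0) h0)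

/-- Let `ν ≥ 2` and let `h₁,…,h_m ∈ ℤ^ν` generate `ℤ^ν` as a group.  Then in the group
algebra `ℂ[ℤ^ν]`, every common divisor of the elements `x^{h₁} − 1, …, x^{h_m} − 1` is a
unit. -/
theorem common_divisor_isUnit_of_generating_exponents
    (ν : ℕ) (hν : 2 ≤ ν) (m : ℕ) (h : Fin m → (Fin ν → ℤ))
    (hgen : AddSubgroup.closure (Set.range h) = (⊤ : AddSubgroup (Fin ν → ℤ)))
    (g : AddMonoidAlgebra ℂ (Fin ν → ℤ))
    (hg : ∀ i, g ∣ (AddMonoidAlgebra.single (h i) (1 : ℂ) - 1)) :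
    IsUnit g := by
  have hall : ∀ v : Fin ν → ℤ, g ∣ AddMonoidAlgebra.single v (1 : ℂ) - 1 := by
    have h1 : AddSubgroup.closure (Set.range h) ≤ exponentSubgroup g := by
      rw [AddSubgroup.closure_le]
      rintro _ ⟨i, rfl⟩
      exact hg i
    intro v
    rw [hgen] at h1
    exact h1 (AddSubgroup.mem_top v)
  let i : Fin ν := ⟨0, by omega⟩
  let j : Fin ν := ⟨1, by omega⟩
  have hij : i ≠ j := by simp [i, j]
  have hne : ∀ k : Fin ν, (Pi.single k 1 : Fin ν → ℤ) ≠ 0 := fun k => by simp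
  have hki : killCoord i (Pi.single i 1) = 0 := by simp [killCoord]
  have hkj : killCoord i (Pi.single j 1) = Pi.single j 1 := by simp [killCoord, hij]
  let φ := AddMonoidAlgebra.mapDomainRingHom ℂ (killCoord i)
  have hφ : ∀ v, φ (AddMonoidAlgebra.single v (1 : ℂ) - 1)
      = AddMonoidAlgebra.single (killCoord i v) (1 : ℂ) - 1 := by
    intro v
    rw [map_sub, map_one]
    simp [φ]
  have hker : ∀ f, φ f = 0 →
      (AddMonoidAlgebra.single (Pi.single i 1 : Fin ν → ℤ) (1 : ℂ) - 1) ∣ f := by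
    intro f hf
    have := dvd_sub_kill i f
    have h2 : AddMonoidAlgebra.mapDomain (killCoord i) f = 0 := hf
    rwa [h2, sub_zero] at this
  obtain ⟨a, ha⟩ := hall (Pi.single i 1)
  have h0 : φ g * φ a = 0 := by
    rw [← map_mul, ← ha, hφ, hki, AddMonoidAlgebra.one_def, sub_self]
  rcases mul_eq_zero.1 h0 with h1 | h1
  · exfalso
    obtain ⟨b, hb⟩ := hall (Pi.single j 1)
    have := congrArg φ hb
    rw [map_mul, h1, zero_mul, hφ, hkj] at this
    exact single_sub_one_ne_zero (hne j) this
  · obtain ⟨c, hc⟩ := hker a h1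
    refine IsUnit.of_mul_eq_one c ?_
    apply mul_left_cancel₀ (single_sub_one_ne_zero (hne i))
    rw [mul_one]
    conv_rhs => rw [ha, hc]
    ring
end

section
/- Let ν ≥ 1, let d ≥ 2 be an integer, let ζ ∈ ℂ be a primitive d-th root of unity, and for i = 1, …, m let h_i ∈ ℤ^ν and n_i ∈ ℤ be such that the elements (h_i, n_i mod d) generate the group ℤ^ν × ℤ/dℤ. Then in the group algebra ℂ[ℤ^ν], every common divisor of the elements ζ^{n₁}·x^{h₁} − 1, …, ζ^{n_m}·x^{h_m} − 1 is a unit. -/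
/-- Let `ν ≥ 1`, `d ≥ 2`, `ζ ∈ ℂ` a primitive `d`-th root of unity, and for `i = 1,…,m`
let `hᵢ ∈ ℤ^ν` and `nᵢ ∈ ℤ` be such that the elements `(hᵢ, nᵢ mod d)` generate
`ℤ^ν × ℤ/dℤ`.  Then in the group algebra `ℂ[ℤ^ν]`, every common divisor of the elements
`ζ^{nᵢ}·x^{hᵢ} − 1` is a unit. -/
theorem common_divisor_isUnit_of_torsion_link
    (ν : ℕ) (hν : 1 ≤ ν) (d : ℕ) (hd : 2 ≤ d) (ζ : ℂ) (hζ : IsPrimitiveRoot ζ d)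
    (m : ℕ) (h : Fin m → (Fin ν → ℤ)) (n : Fin m → ℤ)
    (hgen : AddSubgroup.closure (Set.range fun i => ((h i, (n i : ZMod d)) :
        (Fin ν → ℤ) × ZMod d)) = ⊤)
    (g : AddMonoidAlgebra ℂ (Fin ν → ℤ))
    (hg : ∀ i, g ∣ (AddMonoidAlgebra.single (h i) (ζ ^ (n i)) - 1)) :
    IsUnit g := by
  have hζ0 : ζ ≠ 0 := hζ.ne_zero (by omega)
  have key : ∀ x : (Fin ν → ℤ) × ZMod d, ∀ k : ℤ, (k : ZMod d) = x.2 →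
      g ∣ (AddMonoidAlgebra.single x.1 (ζ ^ k) - 1) := by
    intro x
    have hx : x ∈ AddSubgroup.closure (Set.range fun i => ((h i, (n i : ZMod d)) :
        (Fin ν → ℤ) × ZMod d)) := by rw [hgen]; trivial
    have hpow : ∀ k l : ℤ, (k : ZMod d) = (l : ZMod d) → ζ ^ k = ζ ^ l := by
      intro k l hkl
      have h1 : (d : ℤ) ∣ l - k := (ZMod.intCast_eq_intCast_iff_dvd_sub k l d).1 hkl
      have h2 : ζ ^ (l - k) = 1 := (hζ.zpow_eq_one_iff_dvd _).2 h1
      have h3 : l = (l - k) + k := by ring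
      rw [h3, zpow_add₀ hζ0, h2, one_mul]
    induction hx using AddSubgroup.closure_induction with
    | mem x hx =>
      obtain ⟨i, rfl⟩ := hx
      intro k hk
      have := hg i
      rw [← hpow k (n i) hk] at this
      exact this
    | zero =>
      intro k hk
      have h1 : ζ ^ k = 1 := by
        rw [hpow k 0 (by simpa using hk), zpow_zero]
      rw [h1]
      simp [AddMonoidAlgebra.one_def]
    | add x y _ _ ihx ihy =>
      intro k hk
      obtain ⟨a, ha⟩ := ZMod.intCast_surjective x.2
      have h1 := ihx a ha
      have h2 := ihy (k - a) (by push_cast; rw [hk, ha]; simp)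
      have h3 : (AddMonoidAlgebra.single (x + y).1 (ζ ^ k) : AddMonoidAlgebra ℂ (Fin ν → ℤ)) =
          AddMonoidAlgebra.single x.1 (ζ ^ a) * AddMonoidAlgebra.single y.1 (ζ ^ (k - a)) := by
        rw [AddMonoidAlgebra.single_mul_single, ← zpow_add₀ hζ0]
        simp
      rw [h3]
      have h4 := dvd_add (Dvd.dvd.mul_left h2 (AddMonoidAlgebra.single x.1 (ζ ^ a))) h1
      convert h4 using 1
      ring
    | neg x _ ih =>
      intro k hk
      have h1 := ih (-k) (by push_cast; rw [hk]; simp)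
      have h3 : (AddMonoidAlgebra.single (-x).1 (ζ ^ k) : AddMonoidAlgebra ℂ (Fin ν → ℤ)) *
          AddMonoidAlgebra.single x.1 (ζ ^ (-k)) = 1 := by
        rw [AddMonoidAlgebra.single_mul_single, ← zpow_add₀ hζ0]
        simp [AddMonoidAlgebra.one_def]
      have h4 := Dvd.dvd.mul_left h1 (-AddMonoidAlgebra.single (-x).1 (ζ ^ k))
      convert h4 using 1
      linear_combination h3
  have h1 := key (0, 1) 1 (by simp)
  have hne : ζ - 1 ≠ 0 := sub_ne_zero.2 (hζ.ne_one (by omega))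
  refine isUnit_of_dvd_unit h1 (IsUnit.of_mul_eq_one (AddMonoidAlgebra.single 0 (ζ - 1)⁻¹) ?_)
  rw [AddMonoidAlgebra.one_def, ← AddMonoidAlgebra.single_sub,
    AddMonoidAlgebra.single_mul_single, zpow_one, mul_inv_cancel₀ hne, add_zero]
end
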